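/- Let n ∈ ℝ_{>0}, p ∈ ℝ², and let Λ ⊇ ℤ² be a superlattice of ℤ² such that (1,0) and (0,1) are primitive vectors of Λ. Set m := (1/det Λ)·max{n, 2}. Then for every real number k ≥ 2, the number of vertices of conv(H_n ∩ (p+Λ)) is at most (2⁸·π²·(k−1)²/k)^{1/3} · m^{1/3} · (log_k m + 2). -/

import Mathlib

/-!
The hull is an upper set for the product order, because the point set is closed under the unit steps
`(1, 0), (0, 1) ∈ Λ`. An extreme point `P` of an upper set `K` is minimal in it: if `x ≤ P` with
`x ∈ K`, then `P` is the midpoint of `x` and `2 P - x ∈ K`. So the vertices form an antichain, the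
middle one of any three lies strictly below the chord through the outer two, and no vertex `(x, y)`
can be moved by a unit left or down inside `H_n`, whence `x y ≤ 2 N` with `N = max n 2`.

Cross products of vectors of `Λ` are integer multiples of `δ = det Λ`. Hence distinct vertices
differ by at least `δ` in each coordinate, and all but at most two vertices have both coordinates at
least `δ`. The abscissas of the latter lie in `[δ, 2 N / δ]`, an interval of ratio at most `m ^ 2`,
which `2 * logb k m + 1` slabs of ratio `k` cover. The vertices in one slab have a bounding box of
area at most `2 (k - 1) N`, and consecutive edges span parallelograms of area at least `δ`. An
affine-length argument bounds their number by `2 + 5 β / 3`, where `β ^ 3 = 2 (k - 1) m`.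
-/

noncomputable section

/-- The closed region on and above the positive branch of the hyperbola `x*y = n`. -/
def Hset (n : ℝ) : Set (ℝ × ℝ) := {q | 0 ≤ q.1 ∧ 0 ≤ q.2 ∧ n ≤ q.1 * q.2}

/-- The integer lattice `ℤ² ⊂ ℝ²`. -/
def intLattice : Set (ℝ × ℝ) := {q | ∃ a b : ℤ, q = ((a : ℝ), (b : ℝ))}

/-- The lattice generated by two vectors `v, w`. -/
def latticeOf (v w : ℝ × ℝ) : Set (ℝ × ℝ) :=
  {q | ∃ a b : ℤ, q = (a : ℝ) • v + (b : ℝ) • w}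

/-- The covolume (absolute determinant) of the lattice with basis `v, w`. -/
def detOf (v w : ℝ × ℝ) : ℝ := |v.1 * w.2 - v.2 * w.1|

/-- The translate `p + S` of a set `S ⊆ ℝ²`. -/
def translateSet (p : ℝ × ℝ) (S : Set (ℝ × ℝ)) : Set (ℝ × ℝ) := (fun q => p + q) '' S

/-- `u` is a primitive vector of the lattice `Λ`: `u ∈ Λ` and `u` is not a multiple
`k • w`, `k ≥ 2`, of any `w ∈ Λ`. -/
def IsPrimitiveVec (Λ : Set (ℝ × ℝ)) (u : ℝ × ℝ) : Prop :=
  u ∈ Λ ∧ ∀ w ∈ Λ, ∀ k : ℤ, 2 ≤ k → u ≠ (k : ℝ) • w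

/-- The cross product (signed area of the spanned parallelogram) of two plane vectors; it serves to
express both covolumes and left turns. -/
def cross (u u' : ℝ × ℝ) : ℝ := u.1 * u'.2 - u.2 * u'.1

/-! ### Upper sets and their extreme points -/

lemma add_smul_mem_convexHull {E : Type*} [AddCommGroup E] [Module ℝ E] {S : Set E} {u : E}
    (hS : ∀ q ∈ S, q + u ∈ S) {x : E} (hx : x ∈ convexHull ℝ S) {t : ℝ} (ht : 0 ≤ t) :
    x + t • u ∈ convexHull ℝ S := by
  have add_nsmul_mem {q : E} (hq : q ∈ S) (j : ℕ) : q + (j : ℝ) • u ∈ S := by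
    induction j with
    | zero => simpa using hq
    | succ j ih => simpa [add_smul, ← add_assoc] using hS _ ih
  refine convexHull_min (fun q hq => ?_)
    ((convex_convexHull ℝ S).translate_preimage_left (t • u)) hx
  obtain ⟨j, hj⟩ := exists_nat_gt t
  have hj0 : (0 : ℝ) < j := ht.trans_lt hj
  refine (convex_convexHull ℝ S).segment_subset (subset_convexHull ℝ S hq)
    (subset_convexHull ℝ S (add_nsmul_mem hq j)) ?_
  refine ⟨1 - t / j, t / j, sub_nonneg.2 ((div_le_one hj0).2 hj.le), by positivity, by ring, ?_⟩
  calc (1 - t / j) • q + (t / j) • (q + (j : ℝ) • u) = q + (t / j * j) • u := by module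
    _ = q + t • u := by rw [div_mul_cancel₀ t hj0.ne']

lemma isUpperSet_convexHull {S : Set (ℝ × ℝ)} (hright : ∀ q ∈ S, q + (1, 0) ∈ S)
    (hup : ∀ q ∈ S, q + (0, 1) ∈ S) : IsUpperSet (convexHull ℝ S) := by
  intro x y hxy hx
  have hy : y = x + (y.1 - x.1) • (1, 0) + (y.2 - x.2) • (0, 1) := by ext <;> simp
  rw [hy]
  exact add_smul_mem_convexHull hup
    (add_smul_mem_convexHull hright hx (sub_nonneg.2 hxy.1)) (sub_nonneg.2 hxy.2)

lemma eq_of_le_of_mem_extremePoints {E : Type*} [AddCommGroup E] [PartialOrder E]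
    [IsOrderedAddMonoid E] [Module ℝ E] {K : Set E} (hK : IsUpperSet K) {x P : E}
    (hP : P ∈ K.extremePoints ℝ) (hx : x ∈ K) (hxP : x ≤ P) : x = P :=
  hP.2 hx (hK (le_add_of_nonneg_right (sub_nonneg.2 hxP)) hP.1 : P + (P - x) ∈ K)
    ⟨1 / 2, 1 / 2, by norm_num, by norm_num, by norm_num, by module⟩

lemma cross_pos_of_mem_extremePoints {K : Set (ℝ × ℝ)} (hK : IsUpperSet K) (hconv : Convex ℝ K)
    {P Q R : ℝ × ℝ} (hP : P ∈ K) (hQ : Q ∈ K.extremePoints ℝ) (hR : R ∈ K) (hPQ : P.1 < Q.1)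
    (hQR : Q.1 < R.1) : 0 < cross (Q - P) (R - Q) := by
  by_contra! hcross
  have hd : 0 < R.1 - P.1 := by linarith
  -- The point of the chord `P R` with the abscissa of `Q`.
  set T : ℝ × ℝ := ((R.1 - Q.1) / (R.1 - P.1)) • P + ((Q.1 - P.1) / (R.1 - P.1)) • R with hT
  have hTmem : T ∈ openSegment ℝ P R :=
    ⟨_, _, div_pos (by linarith) hd, div_pos (by linarith) hd, by field_simp; ring, rfl⟩
  have hT1 : T.1 = Q.1 := by
    simp only [hT, Prod.fst_add, Prod.smul_fst, smul_eq_mul]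
    field_simp
    ring
  have hT2 : T.2 - Q.2 = cross (Q - P) (R - Q) / (R.1 - P.1) := by
    simp only [hT, cross, Prod.snd_add, Prod.smul_snd, smul_eq_mul, Prod.fst_sub, Prod.snd_sub]
    field_simp
    ring
  have hTQ : T ≤ Q :=
    ⟨hT1.le, sub_nonpos.1 (hT2.trans_le (div_nonpos_of_nonpos_of_nonneg hcross hd.le))⟩
  have hTeq : T = Q :=
    eq_of_le_of_mem_extremePoints hK hQ (hconv.openSegment_subset hP hR hTmem) hTQ
  have hPeq : P = Q := hQ.2 hP hR (hTeq ▸ hTmem)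
  exact hPQ.ne (congrArg Prod.fst hPeq)

lemma snd_lt_of_isAntichain {S : Set (ℝ × ℝ)} (hS : IsAntichain (· ≤ ·) S) {P Q : ℝ × ℝ}
    (hP : P ∈ S) (hQ : Q ∈ S) (h : P.1 < Q.1) : Q.2 < P.2 := by
  by_contra! hle
  exact hS hP hQ (fun hPQ => h.ne (congrArg Prod.fst hPQ)) ⟨h.le, hle⟩

lemma injOn_fst_of_isAntichain {S : Set (ℝ × ℝ)} (hS : IsAntichain (· ≤ ·) S) :
    S.InjOn Prod.fst := fun P hP Q hQ h =>
  (le_total P.2 Q.2).elim (fun h2 => hS.eq hP hQ ⟨h.le, h2⟩) fun h2 => hS.eq' hP hQ ⟨h.ge, h2⟩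

/-! ### Convex chains -/

lemma three_le_add_of_one_le_mul {a b c : ℝ} (ha : 0 ≤ a) (hb : 0 ≤ b) (hc : 0 ≤ c)
    (h : 1 ≤ a * b * c) : 3 ≤ a + b + c := by
  have amgm := Real.geom_mean_le_arith_mean3_weighted (w₁ := 1 / 3) (w₂ := 1 / 3) (w₃ := 1 / 3)
    (by norm_num) (by norm_num) (by norm_num) ha hb hc (by norm_num)
  rw [← Real.mul_rpow ha hb, ← Real.mul_rpow (mul_nonneg ha hb) hc] at amgm
  have : (1 : ℝ) ≤ (a * b * c) ^ (1 / 3 : ℝ) := Real.one_le_rpow h (by norm_num)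
  linarith

/-- AM-GM turns the product in the hypothesis into a sum, which telescopes. -/
lemma three_mul_le_of_one_le_mul {E : ℕ} {f φ : ℕ → ℝ} {β : ℝ} (hβ : 0 ≤ β)
    (hf : ∀ i ≤ E, 0 ≤ f i)
    (h : ∀ i < E, 1 ≤ β ^ 3 * (f i * f (i + 1) * (φ i - φ (i + 1)))) :
    3 * (E : ℝ) ≤ β * (2 * ∑ i ∈ Finset.range (E + 1), f i + (φ 0 - φ E)) := by
  have hstep : ∀ i ∈ Finset.range E, 3 ≤ β * f i + β * f (i + 1) + β * (φ i - φ (i + 1)) := by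
    intro i hi
    have hiE := Finset.mem_range.1 hi
    have hfi := hf i hiE.le
    have hfi' := hf (i + 1) hiE
    have hφ : 0 ≤ φ i - φ (i + 1) :=
      (pos_of_mul_pos_right (a := β ^ 3 * (f i * f (i + 1))) (by linarith [h i hiE])
        (by positivity)).le
    exact three_le_add_of_one_le_mul (by positivity) (by positivity) (by positivity)
      ((h i hiE).trans_eq (by ring))
  have hfirst := mul_nonneg hβ (hf 0 E.zero_le)
  have hlast := mul_nonneg hβ (hf E le_rfl)
  calc 3 * (E : ℝ) = ∑ _i ∈ Finset.range E, (3 : ℝ) := by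
        rw [Finset.sum_const, Finset.card_range, nsmul_eq_mul, mul_comm]
    _ ≤ ∑ i ∈ Finset.range E, (β * f i + β * f (i + 1) + β * (φ i - φ (i + 1))) :=
        Finset.sum_le_sum hstep
    _ = β * ∑ i ∈ Finset.range E, f i + β * ∑ i ∈ Finset.range E, f (i + 1)
          + β * (φ 0 - φ E) := by
        simp only [Finset.sum_add_distrib, ← Finset.mul_sum, Finset.sum_range_sub']
    _ ≤ β * (2 * ∑ i ∈ Finset.range (E + 1), f i + (φ 0 - φ E)) := by
        have h1 := Finset.sum_range_succ f E
        have h2 := Finset.sum_range_succ' f E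
        linear_combination hfirst + hlast - β * h1 - β * h2

/-- With `X`, `Y` the sums of the `a i` and the `b i`, give the edge `(a, -b)` the length
`f = a / X + b / Y` and the direction `φ = (b / Y) / f ∈ [0, 1]`. Consecutive edges then satisfy
`f f' (φ - φ') = (b a' - b' a) / (X Y) ≥ δ / (X Y)`, and the lengths add up to `2`. -/
lemma three_mul_le_of_le_cross {E : ℕ} {a b : ℕ → ℝ} {δ β : ℝ} (hβ : 0 ≤ β)
    (ha : ∀ i ≤ E, 0 < a i) (hb : ∀ i ≤ E, 0 < b i)
    (hcross : ∀ i < E, δ ≤ b i * a (i + 1) - b (i + 1) * a i)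
    (hbox : (∑ i ∈ Finset.range (E + 1), a i) * ∑ i ∈ Finset.range (E + 1), b i ≤ β ^ 3 * δ) :
    3 * (E : ℝ) ≤ 5 * β := by
  have sum_pos {c : ℕ → ℝ} (hc : ∀ i ≤ E, 0 < c i) : 0 < ∑ i ∈ Finset.range (E + 1), c i :=
    Finset.sum_pos (fun i hi => hc i (Finset.mem_range_succ_iff.1 hi)) ⟨0, by simp⟩
  have hX := sum_pos ha
  have hY := sum_pos hb
  set X := ∑ i ∈ Finset.range (E + 1), a i
  set Y := ∑ i ∈ Finset.range (E + 1), b i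
  set f : ℕ → ℝ := fun i => a i / X + b i / Y with hf_def
  set φ : ℕ → ℝ := fun i => b i / Y / f i with hφ_def
  have hf : ∀ i ≤ E, 0 < f i := fun i hi => add_pos (div_pos (ha i hi) hX) (div_pos (hb i hi) hY)
  have hprod : ∀ i < E, f i * f (i + 1) * (φ i - φ (i + 1)) =
      (b i * a (i + 1) - b (i + 1) * a i) / (X * Y) := by
    intro i hi
    have hfi := hf i hi.le
    have hfi' := hf (i + 1) hi
    calc f i * f (i + 1) * (φ i - φ (i + 1)) = b i / Y * f (i + 1) - b (i + 1) / Y * f i := by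
          simp only [hφ_def]
          field_simp
      _ = (b i * a (i + 1) - b (i + 1) * a i) / (X * Y) := by
          simp only [hf_def]
          field_simp
          ring
  have hone : ∀ i < E, 1 ≤ β ^ 3 * (f i * f (i + 1) * (φ i - φ (i + 1))) := by
    intro i hi
    rw [hprod i hi, ← mul_div_assoc, one_le_div (mul_pos hX hY)]
    exact hbox.trans (mul_le_mul_of_nonneg_left (hcross i hi) (by positivity))
  have hlen : ∑ i ∈ Finset.range (E + 1), f i = 2 := by
    rw [Finset.sum_add_distrib, ← Finset.sum_div, ← Finset.sum_div, div_self hX.ne',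
      div_self hY.ne', one_add_one_eq_two]
  have hφ0 : φ 0 ≤ 1 := (div_le_one (hf 0 E.zero_le)).2
    (le_add_of_nonneg_left (div_pos (ha 0 E.zero_le) hX).le)
  have hφE : 0 ≤ φ E := (div_pos (div_pos (hb E le_rfl) hY) (hf E le_rfl)).le
  calc 3 * (E : ℝ) ≤ β * (2 * ∑ i ∈ Finset.range (E + 1), f i + (φ 0 - φ E)) :=
        three_mul_le_of_one_le_mul hβ (fun i hi => (hf i hi).le) hone
    _ ≤ β * 5 := mul_le_mul_of_nonneg_left (by linarith) hβ
    _ = 5 * β := mul_comm _ _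

lemma exists_enumeration_lt {α γ : Type*} [LinearOrder γ] {S : Finset α} {f : α → γ}
    (hf : Set.InjOn f S) {M : ℕ} (hM : S.card = M + 1) :
    ∃ P : ℕ → α, (∀ i, P i ∈ S) ∧ ∀ i j, i < j → j ≤ M → f (P i) < f (P j) := by
  classical
  set e := (S.image f).orderEmbOfFin ((Finset.card_image_of_injOn hf).trans hM)
  have hpre : ∀ i, ∃ P ∈ S, f P = e i := fun i =>
    Finset.mem_image.1 (Finset.orderEmbOfFin_mem (S.image f) _ i)
  choose P hPS hPe using hpre
  refine ⟨fun i => P (Fin.clamp i M), fun i => hPS _, fun i j hij hj => ?_⟩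
  rw [hPe, hPe, e.lt_iff_lt, Fin.lt_def, Fin.coe_clamp, Fin.coe_clamp]
  omega

/-- A `δ`-convex chain: a set of plane points that, read from left to right, descends strictly and
turns left by a parallelogram of area at least `δ` at every point. Descent is encoded as being an
antichain for the product order. -/
structure IsConvexChain (δ : ℝ) (S : Set (ℝ × ℝ)) : Prop where
  isAntichain : IsAntichain (· ≤ ·) S
  le_cross : ∀ ⦃P⦄, P ∈ S → ∀ ⦃Q⦄, Q ∈ S → ∀ ⦃R⦄, R ∈ S → P.1 < Q.1 → Q.1 < R.1 →
    δ ≤ cross (Q - P) (R - Q)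

lemma IsConvexChain.mono {δ : ℝ} {S T : Set (ℝ × ℝ)} (hS : IsConvexChain δ S) (hTS : T ⊆ S) :
    IsConvexChain δ T where
  isAntichain := hS.isAntichain.subset hTS
  le_cross _ hP _ hQ _ hR := hS.le_cross (hTS hP) (hTS hQ) (hTS hR)

lemma IsConvexChain.card_le {δ β : ℝ} (hβ : 0 ≤ β) {S : Finset (ℝ × ℝ)}
    (hS : IsConvexChain δ S)
    (hbox : ∀ P ∈ S, ∀ Q ∈ S, P.1 ≤ Q.1 → (Q.1 - P.1) * (P.2 - Q.2) ≤ β ^ 3 * δ) :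
    (S.card : ℝ) ≤ 2 + 5 * β / 3 := by
  rcases lt_or_ge S.card 2 with hsmall | hlarge
  · have : (S.card : ℝ) ≤ 2 := by exact_mod_cast hsmall.le
    linarith
  obtain ⟨E, hE⟩ : ∃ E, S.card = E + 1 + 1 := ⟨S.card - 2, by omega⟩
  obtain ⟨P, hPS, hlt⟩ := exists_enumeration_lt (injOn_fst_of_isAntichain hS.isAntichain) hE
  have hedges : 3 * (E : ℝ) ≤ 5 * β := by
    refine three_mul_le_of_le_cross (δ := δ) (a := fun i => (P (i + 1)).1 - (P i).1)
      (b := fun i => (P i).2 - (P (i + 1)).2) hβ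
      (fun i hi => sub_pos.2 (hlt i (i + 1) (by omega) (by omega)))
      (fun i hi => sub_pos.2 (snd_lt_of_isAntichain hS.isAntichain (hPS _) (hPS _)
        (hlt i (i + 1) (by omega) (by omega))))
      (fun i hi => ?_) ?_
    · have := hS.le_cross (hPS i) (hPS (i + 1)) (hPS (i + 2)) (hlt i (i + 1) (by omega) (by omega))
        (hlt (i + 1) (i + 2) (by omega) (by omega))
      simp only [cross, Prod.fst_sub, Prod.snd_sub] at this
      linarith
    · rw [Finset.sum_range_sub (fun i => (P i).1), Finset.sum_range_sub' (fun i => (P i).2)]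
      exact hbox _ (hPS _) _ (hPS _) (hlt 0 (E + 1) E.succ_pos le_rfl).le
  rw [hE]
  push_cast
  linarith

lemma card_le_one_of_isAntichain {S : Finset (ℝ × ℝ)} (hS : IsAntichain (· ≤ ·) (S : Set (ℝ × ℝ)))
    (h : ∀ P ∈ S, ∀ Q ∈ S, ¬ P.1 < Q.1) : S.card ≤ 1 :=
  Finset.card_le_one.2 fun P hP Q hQ => injOn_fst_of_isAntichain hS hP hQ
    (le_antisymm (not_lt.1 (h Q hQ P hP)) (not_lt.1 (h P hP Q hQ)))

/-! ### Counting points -/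

lemma finite_and_ncard_le_of_forall_finset {α : Type*} {s : Set α} {C : ℝ}
    (h : ∀ T : Finset α, ↑T ⊆ s → (T.card : ℝ) ≤ C) : s.Finite ∧ (s.ncard : ℝ) ≤ C := by
  have hfin : s.Finite := by
    by_contra hinf
    obtain ⟨T, hTs, hT⟩ := Set.Infinite.exists_subset_card_eq hinf (⌊C⌋₊ + 1)
    have hle := h T hTs
    rw [hT, Nat.cast_add_one] at hle
    exact (Nat.lt_floor_add_one C).not_ge hle
  refine ⟨hfin, ?_⟩
  rw [Set.ncard_eq_toFinset_card s hfin]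
  exact h _ hfin.coe_toFinset.subset

lemma card_le_mul_logb_add_one {α : Type*} {G : Finset α} {f : α → ℝ} {a r k C : ℝ} (ha : 0 < a)
    (hr : 1 ≤ r) (hk : 1 < k) (hf : ∀ q ∈ G, f q ∈ Set.Icc a (r * a))
    (hC : ∀ T ⊆ G, ∀ s, (∀ q ∈ T, f q ∈ Set.Ico s (k * s)) → (T.card : ℝ) ≤ C) :
    (G.card : ℝ) ≤ C * (Real.logb k r + 1) := by
  classical
  set J := ⌊Real.logb k r⌋₊
  let slab (j : ℕ) : Finset α := {q ∈ G | f q ∈ Set.Ico (a * k ^ j) (k * (a * k ^ j))}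
  have hC0 : 0 ≤ C := by simpa using hC ∅ (Finset.empty_subset G) 0 (by simp)
  have hcover : G ⊆ (Finset.range (J + 1)).biUnion slab := by
    intro q hq
    obtain ⟨hqa, hqr⟩ := hf q hq
    obtain ⟨j, hj, hj'⟩ := exists_nat_pow_near ((one_le_div ha).2 hqa) hk
    have hjJ : j ≤ J := by
      refine Nat.le_floor ((Real.le_logb_iff_rpow_le hk (by linarith)).2 ?_)
      rw [Real.rpow_natCast]
      exact hj.trans ((div_le_iff₀ ha).2 hqr)
    rw [le_div_iff₀ ha] at hj
    rw [div_lt_iff₀ ha] at hj'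
    refine Finset.mem_biUnion.2 ⟨j, Finset.mem_range_succ_iff.2 hjJ, Finset.mem_filter.2 ⟨hq, ?_⟩⟩
    exact ⟨by linarith, hj'.trans_eq (by ring)⟩
  calc (G.card : ℝ) ≤ ∑ j ∈ Finset.range (J + 1), ((slab j).card : ℝ) := by
        exact_mod_cast (Finset.card_le_card hcover).trans Finset.card_biUnion_le
    _ ≤ ∑ _j ∈ Finset.range (J + 1), C := Finset.sum_le_sum fun j _ =>
        hC _ (Finset.filter_subset _ _) _ fun q hq => (Finset.mem_filter.1 hq).2
    _ = C * (J + 1) := by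
        rw [Finset.sum_const, Finset.card_range, nsmul_eq_mul, Nat.cast_add_one, mul_comm]
    _ ≤ C * (Real.logb k r + 1) := by
        gcongr
        exact Nat.floor_le (Real.logb_nonneg hk hr)

/-! ### Lattices -/

section Lattices

variable {p v w : ℝ × ℝ}

lemma neg_mem_latticeOf {u : ℝ × ℝ} (hu : u ∈ latticeOf v w) : -u ∈ latticeOf v w := by
  obtain ⟨a, b, rfl⟩ := hu
  exact ⟨-a, -b, by push_cast; module⟩

lemma add_mem_translateSet {P u : ℝ × ℝ} (hP : P ∈ translateSet p (latticeOf v w))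
    (hu : u ∈ latticeOf v w) : P + u ∈ translateSet p (latticeOf v w) := by
  obtain ⟨_, ⟨a, b, rfl⟩, rfl⟩ := hP
  obtain ⟨c, d, rfl⟩ := hu
  exact ⟨_, ⟨a + c, b + d, rfl⟩, by push_cast; module⟩

lemma sub_mem_latticeOf {P Q : ℝ × ℝ} (hP : P ∈ translateSet p (latticeOf v w))
    (hQ : Q ∈ translateSet p (latticeOf v w)) : P - Q ∈ latticeOf v w := by
  obtain ⟨_, ⟨a, b, rfl⟩, rfl⟩ := hP
  obtain ⟨_, ⟨c, d, rfl⟩, rfl⟩ := hQ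
  exact ⟨a - c, b - d, by push_cast; module⟩

lemma exists_int_cross_eq {u u' : ℝ × ℝ} (hu : u ∈ latticeOf v w) (hu' : u' ∈ latticeOf v w) :
    ∃ z : ℤ, cross u u' = z * cross v w := by
  obtain ⟨a, b, rfl⟩ := hu
  obtain ⟨c, d, rfl⟩ := hu'
  refine ⟨a * d - b * c, ?_⟩
  simp only [cross, Prod.fst_add, Prod.snd_add, Prod.smul_fst, Prod.smul_snd, smul_eq_mul]
  push_cast
  ring

lemma detOf_le_cross {u u' : ℝ × ℝ} (hu : u ∈ latticeOf v w) (hu' : u' ∈ latticeOf v w)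
    (h : 0 < cross u u') : detOf v w ≤ cross u u' := by
  obtain ⟨z, hz⟩ := exists_int_cross_eq hu hu'
  have hz0 : z ≠ 0 := by
    rintro rfl
    simp [hz] at h
  have hz1 : (1 : ℝ) ≤ |(z : ℝ)| := by exact_mod_cast Int.one_le_abs hz0
  calc detOf v w ≤ |(z : ℝ)| * |cross v w| := le_mul_of_one_le_left (abs_nonneg _) hz1
    _ = cross u u' := by rw [← abs_mul, ← hz, abs_of_pos h]

section Superlattice

variable (hsup : intLattice ⊆ latticeOf v w)

include hsup

lemma one_zero_mem_latticeOf : ((1 : ℝ), (0 : ℝ)) ∈ latticeOf v w := hsup ⟨1, 0, by simp⟩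

lemma zero_one_mem_latticeOf : ((0 : ℝ), (1 : ℝ)) ∈ latticeOf v w := hsup ⟨0, 1, by simp⟩

lemma detOf_pos : 0 < detOf v w := by
  obtain ⟨z, hz⟩ :=
    exists_int_cross_eq (one_zero_mem_latticeOf hsup) (zero_one_mem_latticeOf hsup)
  refine abs_pos.2 fun h0 => ?_
  rw [show cross v w = 0 from h0] at hz
  simp [cross] at hz

lemma detOf_le_one : detOf v w ≤ 1 := by
  simpa [cross] using
    detOf_le_cross (one_zero_mem_latticeOf hsup) (zero_one_mem_latticeOf hsup) (by simp [cross])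

lemma detOf_le_fst_sub {P Q : ℝ × ℝ} (hP : P ∈ translateSet p (latticeOf v w))
    (hQ : Q ∈ translateSet p (latticeOf v w)) (h : P.1 < Q.1) : detOf v w ≤ Q.1 - P.1 := by
  simpa [cross] using detOf_le_cross (sub_mem_latticeOf hQ hP) (zero_one_mem_latticeOf hsup)
    (by simpa [cross] using h)

lemma detOf_le_snd_sub {P Q : ℝ × ℝ} (hP : P ∈ translateSet p (latticeOf v w))
    (hQ : Q ∈ translateSet p (latticeOf v w)) (h : P.2 < Q.2) : detOf v w ≤ Q.2 - P.2 := by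
  simpa [cross] using detOf_le_cross (one_zero_mem_latticeOf hsup) (sub_mem_latticeOf hQ hP)
    (by simpa [cross] using h)

end Superlattice

end Lattices

/-! ### The vertices -/

section Vertices

variable {n : ℝ} {p v w : ℝ × ℝ}

/-- The point set `H_{n,p+Λ}`, where `Λ` is the lattice generated by `v` and `w`. -/
def hyperbolaPoints (n : ℝ) (p v w : ℝ × ℝ) : Set (ℝ × ℝ) :=
  Hset n ∩ translateSet p (latticeOf v w)

/-- The vertices of `conv(H_{n,p+Λ})`, encoded as the extreme points of the hull. -/
def hullVertices (n : ℝ) (p v w : ℝ × ℝ) : Set (ℝ × ℝ) :=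
  (convexHull ℝ (hyperbolaPoints n p v w)).extremePoints ℝ

lemma isUpperSet_Hset : IsUpperSet (Hset n) := fun _ _ hxy ⟨hx1, hx2, hx⟩ =>
  ⟨hx1.trans hxy.1, hx2.trans hxy.2, hx.trans (mul_le_mul hxy.1 hxy.2 hx2 (hx1.trans hxy.1))⟩

lemma mul_le_two_mul_of_mul_sub_one_lt {x y N : ℝ} (hx : 0 ≤ x) (hxy : x ≤ y) (hN : 2 ≤ N)
    (h : 1 ≤ y → x * (y - 1) < N) : x * y ≤ 2 * N := by
  rcases lt_or_ge y 1 with hy1 | hy1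
  · nlinarith
  have hxN : x ≤ N := by
    by_contra! hNx
    have : x * (x - 1) ≤ x * (y - 1) := by gcongr
    nlinarith [h hy1]
  linarith [h hy1]

lemma hullVertices_subset : hullVertices n p v w ⊆ hyperbolaPoints n p v w :=
  extremePoints_convexHull_subset

lemma add_mem_hyperbolaPoints {q u : ℝ × ℝ} (hq : q ∈ hyperbolaPoints n p v w)
    (hu : u ∈ latticeOf v w) (hu0 : 0 ≤ u) : q + u ∈ hyperbolaPoints n p v w :=
  ⟨isUpperSet_Hset (le_add_of_nonneg_right hu0) hq.1, add_mem_translateSet hq.2 hu⟩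

section Superlattice

variable (hsup : intLattice ⊆ latticeOf v w)

include hsup

lemma isUpperSet_convexHull_hyperbolaPoints :
    IsUpperSet (convexHull ℝ (hyperbolaPoints n p v w)) :=
  isUpperSet_convexHull
    (fun _ hq => add_mem_hyperbolaPoints hq (one_zero_mem_latticeOf hsup) (by simp [Prod.le_def]))
    (fun _ hq => add_mem_hyperbolaPoints hq (zero_one_mem_latticeOf hsup) (by simp [Prod.le_def]))

lemma isConvexChain_hullVertices : IsConvexChain (detOf v w) (hullVertices n p v w) where
  isAntichain _ hP _ hQ hne hle := hne <|
    eq_of_le_of_mem_extremePoints (isUpperSet_convexHull_hyperbolaPoints hsup) hQ hP.1 hle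
  le_cross _ hP _ hQ _ hR hPQ hQR :=
    detOf_le_cross
      (sub_mem_latticeOf (hullVertices_subset hQ).2 (hullVertices_subset hP).2)
      (sub_mem_latticeOf (hullVertices_subset hR).2 (hullVertices_subset hQ).2)
      (cross_pos_of_mem_extremePoints (isUpperSet_convexHull_hyperbolaPoints hsup)
        (convex_convexHull ℝ _) hP.1 hQ hR.1 hPQ hQR)

lemma sub_notMem_Hset_of_mem_hullVertices {q u : ℝ × ℝ} (hq : q ∈ hullVertices n p v w)
    (hu : u ∈ latticeOf v w) (hu0 : 0 < u) : q - u ∉ Hset n := by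
  intro hmem
  have hlattice : q - u ∈ translateSet p (latticeOf v w) := by
    rw [sub_eq_add_neg]
    exact add_mem_translateSet (hullVertices_subset hq).2 (neg_mem_latticeOf hu)
  have heq : q - u = q :=
    eq_of_le_of_mem_extremePoints (isUpperSet_convexHull_hyperbolaPoints hsup) hq
      (subset_convexHull ℝ _ ⟨hmem, hlattice⟩) (sub_le_self q hu0.le)
  exact hu0.ne' (sub_eq_self.1 heq)

lemma fst_mul_snd_le_of_mem_hullVertices {q : ℝ × ℝ} (hq : q ∈ hullVertices n p v w) :
    q.1 * q.2 ≤ 2 * max n 2 := by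
  obtain ⟨hq1, hq2, -⟩ := (hullVertices_subset hq).1
  rcases le_total q.1 q.2 with h | h
  · refine mul_le_two_mul_of_mul_sub_one_lt hq1 h (le_max_right _ _) fun hy => ?_
    by_contra! hn
    refine sub_notMem_Hset_of_mem_hullVertices hsup hq (zero_one_mem_latticeOf hsup)
      (by simp [Prod.lt_iff]) ?_
    simpa [Hset, hq1, hy] using (le_max_left _ _).trans hn
  · rw [mul_comm]
    refine mul_le_two_mul_of_mul_sub_one_lt hq2 h (le_max_right _ _) fun hx => ?_
    by_contra! hn
    refine sub_notMem_Hset_of_mem_hullVertices hsup hq (one_zero_mem_latticeOf hsup)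
      (by simp [Prod.lt_iff]) ?_
    simpa [Hset, hq2, hx, mul_comm] using (le_max_left _ _).trans hn

lemma card_le_one_of_fst_lt_detOf {T : Finset (ℝ × ℝ)} (hT : ↑T ⊆ hullVertices n p v w)
    (h : ∀ q ∈ T, q.1 < detOf v w) : T.card ≤ 1 := by
  refine card_le_one_of_isAntichain ((isConvexChain_hullVertices hsup).mono hT).isAntichain
    fun P hP Q hQ hPQ => ?_
  have hgap := detOf_le_fst_sub hsup (hullVertices_subset (hT hP)).2
    (hullVertices_subset (hT hQ)).2 hPQ
  linarith [h Q hQ, (hullVertices_subset (hT hP)).1.1]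

lemma card_le_one_of_snd_lt_detOf {T : Finset (ℝ × ℝ)} (hT : ↑T ⊆ hullVertices n p v w)
    (h : ∀ q ∈ T, q.2 < detOf v w) : T.card ≤ 1 := by
  have hanti := ((isConvexChain_hullVertices hsup).mono hT).isAntichain
  refine card_le_one_of_isAntichain hanti fun P hP Q hQ hPQ => ?_
  have hgap := detOf_le_snd_sub hsup (hullVertices_subset (hT hQ)).2
    (hullVertices_subset (hT hP)).2 (snd_lt_of_isAntichain hanti hP hQ hPQ)
  linarith [h P hP, (hullVertices_subset (hT hQ)).1.2.1]

lemma card_le_of_fst_mem_Ico {k s β : ℝ} (hk : 1 ≤ k) (hβ : 0 ≤ β)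
    (hβk : 2 * (k - 1) * max n 2 ≤ β ^ 3 * detOf v w) {T : Finset (ℝ × ℝ)}
    (hT : ↑T ⊆ hullVertices n p v w) (hs : ∀ q ∈ T, q.1 ∈ Set.Ico s (k * s)) :
    (T.card : ℝ) ≤ 2 + 5 * β / 3 := by
  refine ((isConvexChain_hullVertices hsup).mono hT).card_le hβ fun P hP Q hQ hPQ => ?_
  have hP2 : 0 ≤ P.2 := (hullVertices_subset (hT hP)).1.2.1
  have hQ2 : 0 ≤ Q.2 := (hullVertices_subset (hT hQ)).1.2.1
  have hwidth : Q.1 - P.1 ≤ (k - 1) * P.1 := by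
    have : k * s ≤ k * P.1 := mul_le_mul_of_nonneg_left (hs P hP).1 (by linarith)
    linarith [(hs Q hQ).2]
  calc (Q.1 - P.1) * (P.2 - Q.2) ≤ (Q.1 - P.1) * P.2 :=
        mul_le_mul_of_nonneg_left (by linarith) (by linarith)
    _ ≤ (k - 1) * P.1 * P.2 := mul_le_mul_of_nonneg_right hwidth hP2
    _ = (k - 1) * (P.1 * P.2) := by ring
    _ ≤ (k - 1) * (2 * max n 2) := mul_le_mul_of_nonneg_left
        (fst_mul_snd_le_of_mem_hullVertices hsup (hT hP)) (by linarith)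
    _ = 2 * (k - 1) * max n 2 := by ring
    _ ≤ β ^ 3 * detOf v w := hβk

lemma card_le_card_filter_detOf_le_add_two {T : Finset (ℝ × ℝ)}
    (hT : ↑T ⊆ hullVertices n p v w) :
    T.card ≤ (T.filter fun q => detOf v w ≤ q.1 ∧ detOf v w ≤ q.2).card + 2 := by
  set A := T.filter fun q => q.1 < detOf v w
  set B := T.filter fun q => q.2 < detOf v w
  set G := T.filter fun q => detOf v w ≤ q.1 ∧ detOf v w ≤ q.2
  have hA : A.card ≤ 1 := card_le_one_of_fst_lt_detOf hsup
    (fun q hq => hT (Finset.mem_filter.1 hq).1) fun q hq => (Finset.mem_filter.1 hq).2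
  have hB : B.card ≤ 1 := card_le_one_of_snd_lt_detOf hsup
    (fun q hq => hT (Finset.mem_filter.1 hq).1) fun q hq => (Finset.mem_filter.1 hq).2
  have hcover : T ⊆ G ∪ A ∪ B := fun q hq => by grind
  calc T.card ≤ (G ∪ A ∪ B).card := Finset.card_le_card hcover
    _ ≤ G.card + A.card + B.card :=
        (Finset.card_union_le _ _).trans (Nat.add_le_add_right (Finset.card_union_le _ _) _)
    _ ≤ G.card + 2 := by omega

lemma two_le_of_mul_detOf_eq {m : ℝ} (hm : m * detOf v w = max n 2) : 2 ≤ m := by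
  nlinarith [detOf_pos hsup, detOf_le_one hsup, le_max_right n 2]

lemma fst_le_sq_mul_detOf {m : ℝ} (hm : m * detOf v w = max n 2) {q : ℝ × ℝ}
    (hq : q ∈ hullVertices n p v w) (hq2 : detOf v w ≤ q.2) : q.1 ≤ m ^ 2 * detOf v w := by
  refine le_of_mul_le_mul_right ?_ (detOf_pos hsup)
  calc q.1 * detOf v w ≤ q.1 * q.2 :=
        mul_le_mul_of_nonneg_left hq2 (hullVertices_subset hq).1.1
    _ ≤ 2 * max n 2 := fst_mul_snd_le_of_mem_hullVertices hsup hq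
    _ ≤ max n 2 * max n 2 := by gcongr; exact le_max_right _ _
    _ = m ^ 2 * detOf v w * detOf v w := by rw [← hm]; ring

lemma card_le_of_subset_hullVertices {k m β : ℝ} (hk : 1 < k) (hm : m * detOf v w = max n 2)
    (hβ : 0 ≤ β) (hβk : β ^ 3 = 2 * (k - 1) * m) {T : Finset (ℝ × ℝ)}
    (hT : ↑T ⊆ hullVertices n p v w) :
    (T.card : ℝ) ≤ (2 + 5 * β / 3) * (2 * Real.logb k m + 1) + 2 := by
  set G := T.filter fun q => detOf v w ≤ q.1 ∧ detOf v w ≤ q.2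
  have hGT : ↑G ⊆ hullVertices n p v w := fun q hq => hT (Finset.mem_filter.1 hq).1
  have hβδ : 2 * (k - 1) * max n 2 = β ^ 3 * detOf v w := by rw [hβk, ← hm, mul_assoc _ m]
  have hm1 : 1 ≤ m := one_le_two.trans (two_le_of_mul_detOf_eq hsup hm)
  have hrange : ∀ q ∈ G, q.1 ∈ Set.Icc (detOf v w) (m ^ 2 * detOf v w) := fun q hq =>
    ⟨(Finset.mem_filter.1 hq).2.1,
      fst_le_sq_mul_detOf hsup hm (hGT hq) (Finset.mem_filter.1 hq).2.2⟩
  calc (T.card : ℝ) ≤ G.card + 2 := by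
        exact_mod_cast card_le_card_filter_detOf_le_add_two hsup hT
    _ ≤ (2 + 5 * β / 3) * (Real.logb k (m ^ 2) + 1) + 2 := by
        gcongr
        exact card_le_mul_logb_add_one (detOf_pos hsup) (one_le_pow₀ hm1) hk hrange
          fun U hU s hs => card_le_of_fst_mem_Ico hsup hk.le hβ hβδ.le (fun q hq => hGT (hU hq)) hs
    _ = (2 + 5 * β / 3) * (2 * Real.logb k m + 1) + 2 := by
        rw [Real.logb_pow, Nat.cast_ofNat]

end Superlattice

end Vertices

/-! ### The numerical comparison -/

lemma eight_mul_le_rpow {k m β : ℝ} (hk : 2 ≤ k) (hm : 0 ≤ m) (hβ : 0 ≤ β)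
    (hβk : β ^ 3 = 2 * (k - 1) * m) :
    8 * β ≤ (2 ^ 8 * Real.pi ^ 2 * (k - 1) ^ 2 / k) ^ ((1 : ℝ) / 3) * m ^ ((1 : ℝ) / 3) := by
  have hpi : 9 ≤ Real.pi ^ 2 := by nlinarith [Real.pi_gt_three]
  have hk4 : 4 * k ≤ Real.pi ^ 2 * (k - 1) := by nlinarith
  have hkm : 0 ≤ 2 ^ 8 * (k - 1) * m := by
    have : 0 ≤ k - 1 := by linarith
    positivity
  rw [← Real.mul_rpow (by positivity) hm, one_div,
    Real.le_rpow_inv_iff_of_pos (by positivity) (by positivity) three_pos]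
  calc (8 * β) ^ (3 : ℝ) = 8 ^ 3 * β ^ 3 := by
        rw [← mul_pow]
        exact_mod_cast Real.rpow_natCast (8 * β) 3
    _ = 2 ^ 8 * (k - 1) * m * (4 * k) / k := by
        rw [hβk]
        field_simp
        ring
    _ ≤ 2 ^ 8 * (k - 1) * m * (Real.pi ^ 2 * (k - 1)) / k := by gcongr
    _ = 2 ^ 8 * Real.pi ^ 2 * (k - 1) ^ 2 / k * m := by ring

theorem statement4_general (n : ℝ) (p v w : ℝ × ℝ) (hsup : intLattice ⊆ latticeOf v w)
    (k : ℝ) (hk : 2 ≤ k) (m : ℝ) (hm : m = (1 / detOf v w) * max n 2) :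
    (hullVertices n p v w).Finite ∧ ((hullVertices n p v w).ncard : ℝ) ≤
      (2 ^ 8 * Real.pi ^ 2 * (k - 1) ^ 2 / k) ^ ((1 : ℝ) / 3) * m ^ ((1 : ℝ) / 3) *
        (Real.logb k m + 2) := by
  have hδ : 0 < detOf v w := detOf_pos hsup
  have hmδ : m * detOf v w = max n 2 := by rw [hm]; field_simp
  have hm2 : 2 ≤ m := two_le_of_mul_detOf_eq hsup hmδ
  have hL : 0 ≤ Real.logb k m := Real.logb_nonneg (by linarith) (by linarith)
  have hkm : 1 ≤ 2 * (k - 1) * m := by nlinarith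
  obtain ⟨β, hβ1, hβk⟩ : ∃ β : ℝ, 1 ≤ β ∧ β ^ 3 = 2 * (k - 1) * m :=
    ⟨(2 * (k - 1) * m) ^ ((3 : ℕ) : ℝ)⁻¹, Real.one_le_rpow hkm (by positivity),
      Real.rpow_inv_natCast_pow (by linarith) three_ne_zero⟩
  refine finite_and_ncard_le_of_forall_finset fun T hT => ?_
  calc (T.card : ℝ) ≤ (2 + 5 * β / 3) * (2 * Real.logb k m + 1) + 2 :=
        card_le_of_subset_hullVertices hsup (by linarith) hmδ (by linarith) hβk hT
    _ ≤ 8 * β * (Real.logb k m + 2) := by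
        nlinarith [mul_nonneg hL (sub_nonneg.2 hβ1)]
    _ ≤ _ := mul_le_mul_of_nonneg_right
        (eight_mul_le_rpow hk (by linarith) (by linarith) hβk) (by linarith)

/-- Upper bound on the number of vertices of `conv(H_n ∩ (p + Λ))` for a superlattice
`Λ ⊇ ℤ²` in which `(1,0)` and `(0,1)` are primitive, with `m = (1/det Λ) max {n, 2}`:
for every real `k ≥ 2` the number of vertices is at most
`(2⁸ π² (k-1)²/k)^(1/3) m^(1/3) (log_k m + 2)`. -/
theorem statement4 (n : ℝ) (hn : 0 < n) (p v w : ℝ × ℝ)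
    (hvw : v.1 * w.2 - v.2 * w.1 ≠ 0)
    (hsup : intLattice ⊆ latticeOf v w)
    (hprim1 : IsPrimitiveVec (latticeOf v w) (1, 0))
    (hprim2 : IsPrimitiveVec (latticeOf v w) (0, 1))
    (k : ℝ) (hk : 2 ≤ k)
    (m : ℝ) (hm : m = (1 / detOf v w) * max n 2) :
    ((Set.extremePoints ℝ
        (convexHull ℝ (Hset n ∩ translateSet p (latticeOf v w)))).ncard : ℝ) ≤
      (2 ^ 8 * Real.pi ^ 2 * (k - 1) ^ 2 / k) ^ ((1 : ℝ) / 3) * m ^ ((1 : ℝ) / 3) *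
        (Real.logb k m + 2) :=
  (statement4_general n p v w hsup k hk m hm).2

end
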